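/- arXiv:0902.4448 — 2 statements merged into one kernel-verified Lean document; each statement's English description precedes it below -/
import Mathlib

section
/- Let m, r, d be positive integers with 1 ≤ r < m. If B_m(1,r) order-embeds into a product of d linearly ordered sets, then the relation (λ^{+(d-1)},r,λ)→m holds for every infinite cardinal λ. -/
/-!
The order embedding is only used through the following consequence: writing `ρ k i` for the rank
of `e {i} k` among the singletons, whenever `j` lies outside an `r`-element set `X`, some coordinate
`k` satisfies `ρ k x < ρ k j` for all `x ∈ X`. It therefore suffices to find points `f i` of a set
of size `λ^{+(d-1)}` such that `f j ∉ F (f '' X)` whenever `j` is strictly above `X` in one of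
`d` given rankings.

This is `exists_free_choice`, proved by induction on `d` for transversals: each `f i` is to be
found in a prescribed set `A i` of size at least `λ^{+(d-1)}`. With one ranking the points are
chosen one rank after the other, avoiding the fewer than `λ` values of `F` at earlier points
(`exists_free_choice_one`). With one more ranking and `μ = λ^{+(d-1)}`, `#(A i) ≥ μ⁺`, there is
a chain `U 0 ⊆ U 1 ⊆ …` of `F`-closed sets of size at most `μ` such that each `A i` has at
least `μ` points in every layer `U (t + 1) \ U t` (`exists_closed_chain`). Looking for `f i` in the
layer with index its new rank settles the new ranking, because `F` of points of smaller rank stays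
inside `U (ρ j)`, and the induction hypothesis handles the other `d` rankings.
-/

universe u v w

open Cardinal

/-- The `n`-th cardinal successor `κ⁺ⁿ`. -/
noncomputable def succN (κ : Cardinal.{u}) (n : ℕ) : Cardinal.{u} := Order.succ^[n] κ

/-- The relation `(κ,r,λ)→ρ`: every set mapping `F : [κ]^r → [κ]^{<λ}` of order `r` has
a free set of cardinality `ρ`, i.e. a set `H` with `F(X) ∩ H ⊆ X` for all `X ∈ [H]^r`. -/
def ArrowFree (κ : Cardinal.{u}) (r : ℕ) (lam ρ : Cardinal.{u}) : Prop :=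
  ∀ A : Type u, #A = κ →
    ∀ F : Set A → Set A, (∀ X : Set A, #↥X = (r : Cardinal) → #↥(F X) < lam) →
      ∃ H : Set A, #↥H = ρ ∧
        ∀ X : Set A, X ⊆ H → #↥X = (r : Cardinal) → F X ∩ H ⊆ X

/-- `B_m(1,r)`: all subsets of `{0,…,m-1}` of cardinality `1` or `r`, ordered by
inclusion. -/
abbrev Bm1r (m r : ℕ) : Type := {X : Finset (Fin m) // X.card = 1 ∨ X.card = r}

/-- A set of size at most `μ` is contained in an `F`-closed set of size at most `μ`. -/
lemma exists_closed_superset {α : Type u} {lam μ : Cardinal.{u}} (hμ : ℵ₀ ≤ μ) (hlμ : lam ≤ μ)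
    (F : Finset α → Set α) (hF : ∀ T, #(F T) < lam) (S : Set α) (hS : #S ≤ μ) :
    ∃ U : Set α, S ⊆ U ∧ #U ≤ μ ∧ ∀ T : Finset α, (T : Set α) ⊆ U → F T ⊆ U := by
  classical
  let step : Set α → Set α := fun V => V ∪ ⋃ T : Finset V, F (T.map (Function.Embedding.subtype _))
  have hcard : ∀ n, #(step^[n] S : Set α) ≤ μ := by
    intro n
    induction n with
    | zero => simpa using hS
    | succ n ih =>
      rw [Function.iterate_succ_apply']
      set V := step^[n] S
      refine (mk_union_le _ _).trans (add_le_of_le hμ ih ?_)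
      refine (mk_iUnion_le _).trans ?_
      refine (mul_le_mul' (?_ : _ ≤ μ) (ciSup_le' fun T => (hF _).le.trans hlμ)).trans
        (mul_eq_self hμ).le
      rcases finite_or_infinite V with h | h
      · exact (lt_aleph0_of_finite _).le.trans hμ
      · rw [mk_finset_of_infinite]; exact ih
  have hmono : Monotone fun n => step^[n] S := by
    refine monotone_nat_of_le_succ fun n => ?_
    rw [Function.iterate_succ_apply']
    exact Set.subset_union_left
  refine ⟨⋃ n, step^[n] S, Set.subset_iUnion (fun n => step^[n] S) 0, ?_, ?_⟩
  · have h := mk_iUnion_le_lift (fun n => step^[n] S)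
    simp only [lift_uzero, mk_nat, lift_aleph0] at h
    exact h.trans ((mul_le_mul' hμ (ciSup_le' hcard)).trans (mul_eq_self hμ).le)
  · intro T hT
    -- A finite subset of the union already lies in one of the sets of the chain.
    obtain ⟨n, hn⟩ := hmono.directed_le.exists_mem_subset_of_finset_subset_biUnion hT
    intro y hy
    refine Set.mem_iUnion.2 ⟨n + 1, ?_⟩
    rw [Function.iterate_succ_apply']
    refine Or.inr (Set.mem_iUnion.2 ⟨T.subtype (· ∈ step^[n] S), ?_⟩)
    rw [Finset.subtype_map_of_mem (fun x hx => hn hx)]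
    exact hy

/-- If every `A i` has size at least `μ⁺`, there is an increasing sequence of `F`-closed sets of
size at most `μ` whose successive differences all meet every `A i` in at least `μ` points. -/
lemma exists_closed_chain {α : Type u} {I : Type} [Finite I] {lam μ : Cardinal.{u}}
    (hμ : ℵ₀ ≤ μ) (hlμ : lam ≤ μ) (F : Finset α → Set α) (hF : ∀ T, #(F T) < lam)
    (A : I → Set α) (hA : ∀ i, Order.succ μ ≤ #(A i)) :
    ∃ U : ℕ → Set α, Monotone U ∧ (∀ t (T : Finset α), (T : Set α) ⊆ U t → F T ⊆ U t) ∧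
      ∀ t i, μ ≤ #(A i ∩ (U (t + 1) \ U t) : Set α) := by
  let Good := {U : Set α // #U ≤ μ ∧ ∀ T : Finset α, (T : Set α) ⊆ U → F T ⊆ U}
  have hstep : ∀ U : Good, ∃ U' : Good, U.1 ⊆ U'.1 ∧ ∀ i, μ ≤ #(A i ∩ (U'.1 \ U.1) : Set α) := by
    intro U
    have hV : ∀ i, ∃ V : Set α, V ⊆ A i \ U.1 ∧ #V = μ := by
      intro i
      refine le_mk_iff_exists_subset.1 ?_
      by_contra! hlt
      have h1 : #(A i) ≤ #(A i \ U.1 : Set α) + #U.1 :=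
        (mk_le_mk_of_subset (by intro x hx; by_cases h : x ∈ U.1 <;> simp [h, hx])).trans
          (mk_union_le _ _)
      exact absurd ((hA i).trans (h1.trans (add_le_of_le hμ hlt.le U.2.1)))
        (Order.lt_succ μ).not_ge
    choose V hVA hVμ using hV
    obtain ⟨U', hsub, hc, hcl⟩ := exists_closed_superset hμ hlμ F hF (U.1 ∪ ⋃ i, V i) (by
      refine (mk_union_le _ _).trans (add_le_of_le hμ U.2.1 ?_)
      have h := mk_iUnion_le_lift V
      simp only [lift_uzero] at h
      refine h.trans ((mul_le_mul' (?_ : _ ≤ μ) (ciSup_le' fun i => (hVμ i).le)).trans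
        (mul_eq_self hμ).le)
      exact (lift_lt_aleph0.2 (lt_aleph0_of_finite I)).le.trans hμ)
    refine ⟨⟨U', hc, hcl⟩, Set.subset_union_left.trans hsub, fun i => ?_⟩
    refine (hVμ i).ge.trans <| mk_le_mk_of_subset fun x hx =>
      ⟨(hVA i hx).1, hsub (Or.inr (Set.mem_iUnion.2 ⟨i, hx⟩)), (hVA i hx).2⟩
  choose next hnext using hstep
  obtain ⟨U₀, -, hc, hcl⟩ := exists_closed_superset hμ hlμ F hF ∅ (by simp)
  let U : ℕ → Good := fun t => next^[t] ⟨U₀, hc, hcl⟩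
  have hU : ∀ t, U (t + 1) = next (U t) := fun t => Function.iterate_succ_apply' _ _ _
  refine ⟨fun t => (U t).1, monotone_nat_of_le_succ fun t => ?_, fun t => (U t).2.2, fun t i => ?_⟩
  · rw [hU]; exact (hnext _).1
  · dsimp only; rw [hU]; exact (hnext _).2 i

/-- The case of a single ranking: the points are chosen one rank after the other. -/
lemma exists_free_choice_one {α : Type u} [DecidableEq α] {I : Type} [Finite I]
    {lam : Cardinal.{u}} (hlam : ℵ₀ ≤ lam) (F : Finset α → Set α) (hF : ∀ T, #(F T) < lam)
    (A : I → Set α) (hA : ∀ i, lam ≤ #(A i)) (ρ : I → ℕ) :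
    ∃ f : I → α, (∀ i, f i ∈ A i) ∧
      ∀ (X : Finset I) (j : I), (∀ x ∈ X, ρ x < ρ j) → f j ∉ F (X.image f) := by
  have key : ∀ n : ℕ, ∃ f : I → α, (∀ i, f i ∈ A i) ∧
      ∀ (X : Finset I) (j : I), ρ j < n → (∀ x ∈ X, ρ x < ρ j) → f j ∉ F (X.image f) := by
    intro n
    induction n with
    | zero =>
      have : ∀ i, (A i).Nonempty := fun i =>
        Set.nonempty_iff_ne_empty.2 fun h => by
          have := hlam.trans (hA i)
          rw [h, mk_eq_zero] at this
          exact absurd this aleph0_pos.not_ge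
      choose f hf using this
      exact ⟨f, hf, fun X j h => absurd h (Nat.not_lt_zero _)⟩
    | succ n ih =>
      obtain ⟨f, hfA, hf⟩ := ih
      set B : Set α := ⋃ X : Finset I, F (X.image f)
      have hB : #B < lam := by
        have h := mk_iUnion_le_lift fun X : Finset I => F (X.image f)
        simp only [lift_uzero] at h
        refine h.trans_lt (mul_lt_of_lt hlam
          ((lift_lt_aleph0.2 (lt_aleph0_of_finite _)).trans_le hlam) ?_)
        obtain ⟨X, hX⟩ := exists_eq_ciSup_of_finite (f := fun X : Finset I => #(F (X.image f)))
        rw [← hX]; exact hF _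
      have : ∀ i, ∃ x ∈ A i, x ∉ B := by
        intro i
        by_contra! h
        exact absurd ((hA i).trans (mk_le_mk_of_subset h)) hB.not_ge
      choose g hgA hgB using this
      refine ⟨fun i => if ρ i < n then f i else g i, fun i => ?_, fun X j hj hX => ?_⟩
      · dsimp only; split_ifs
        exacts [hfA i, hgA i]
      · have himg : X.image (fun i => if ρ i < n then f i else g i) = X.image f :=
          Finset.image_congr fun x hx => if_pos (by have := hX x hx; omega)
        rw [himg]
        dsimp only; split_ifs with h
        · exact hf X j h hX
        · exact fun hmem => hgB j (Set.mem_iUnion.2 ⟨X, hmem⟩)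
  obtain ⟨N, hN⟩ := (Set.finite_range ρ).bddAbove
  obtain ⟨f, hfA, hf⟩ := key (N + 1)
  exact ⟨f, hfA, fun X j => hf X j (Nat.lt_succ_of_le (hN ⟨j, rfl⟩))⟩

lemma le_succN (lam : Cardinal.{u}) (d : ℕ) : lam ≤ succN lam d :=
  Order.le_succ_iterate d lam

/-- Given `d + 1` rankings of a finite set `I` and sets `A i` of size at least `λ^{+d}`, points
`f i ∈ A i` can be chosen so that `f j` avoids `F (f '' X)` whenever some ranking puts `j` strictly
above all of `X`. -/
lemma exists_free_choice {α : Type u} [DecidableEq α] {I : Type} [Finite I]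
    {lam : Cardinal.{u}} (hlam : ℵ₀ ≤ lam) (F : Finset α → Set α) (hF : ∀ T, #(F T) < lam)
    (d : ℕ) (A : I → Set α) (hA : ∀ i, succN lam d ≤ #(A i)) (ρ : Fin (d + 1) → I → ℕ) :
    ∃ f : I → α, (∀ i, f i ∈ A i) ∧
      ∀ (k : Fin (d + 1)) (X : Finset I) (j : I), (∀ x ∈ X, ρ k x < ρ k j) →
        f j ∉ F (X.image f) := by
  induction d generalizing A with
  | zero =>
    obtain ⟨f, hfA, hf⟩ := exists_free_choice_one hlam F hF A hA (ρ 0)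
    refine ⟨f, hfA, fun k => ?_⟩
    rw [Fin.fin_one_eq_zero k]
    exact hf
  | succ d ih =>
    obtain ⟨U, hmono, hcl, hbig⟩ := exists_closed_chain (hlam.trans (le_succN lam d))
      (le_succN lam d) F hF A (fun i => by
        have := hA i
        rwa [succN, Function.iterate_succ_apply'] at this)
    obtain ⟨f, hfA, hf⟩ := ih (fun i => A i ∩ (U (ρ 0 i + 1) \ U (ρ 0 i)))
      (fun i => hbig _ i) (fun k => ρ k.succ)
    refine ⟨f, fun i => (hfA i).1, fun k => ?_⟩
    cases k using Fin.cases with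
    | succ k => exact hf k
    | zero =>
      intro X j hX hmem
      refine (hfA j).2.2 (hcl _ (X.image f) ?_ hmem)
      intro y hy
      obtain ⟨x, hx, rfl⟩ := Finset.mem_image.1 (Finset.mem_coe.1 hy)
      exact hmono (Nat.succ_le_of_lt (hX x hx)) (hfA x).2.1

/-- If `B_m(1,r)` order-embeds into a product of `d` linearly ordered sets, then
`(λ^{+(d-1)},r,λ)→m` holds for every infinite cardinal `λ`. -/
theorem stmt18 (m r d : ℕ) (hr : 1 ≤ r) (hrm : r < m) (hd : 0 < d)
    (C : Fin d → Type w) [∀ i, LinearOrder (C i)]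
    (e : Bm1r m r ↪o ∀ i, C i) :
    ∀ lam : Cardinal.{u}, ℵ₀ ≤ lam →
      ArrowFree (succN lam (d - 1)) r lam ((m : ℕ) : Cardinal) := by
  classical
  intro lam hlam A hA F hF
  obtain ⟨d, rfl⟩ : ∃ d', d = d' + 1 := ⟨d - 1, by omega⟩
  rw [Nat.add_sub_cancel] at hA
  let s : Fin m → Bm1r m r := fun i => ⟨{i}, Or.inl (Finset.card_singleton i)⟩
  let ρ : Fin (d + 1) → Fin m → ℕ := fun k i =>
    (Finset.univ.filter fun i' => e (s i') k < e (s i) k).card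
  have hρ : ∀ k i j, e (s i) k < e (s j) k → ρ k i < ρ k j := by
    intro k i j hij
    refine Finset.card_lt_card (Finset.ssubset_iff_of_subset ?_ |>.2 ⟨i, ?_, ?_⟩)
    · intro x hx
      simp only [Finset.mem_filter, Finset.mem_univ, true_and] at hx ⊢
      exact hx.trans hij
    · simpa using hij
    · simp
  -- Adding `T` to the value at `T` makes the chosen points distinct.
  let G : Finset A → Set A := fun T => (if T.card = r then F T else ∅) ∪ T
  have hG : ∀ T, #(G T) < lam := by
    intro T
    refine (mk_union_le _ _).trans_lt (add_lt_of_lt hlam ?_ ?_)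
    · split_ifs with h
      · exact hF _ (by simp [h])
      · simpa using aleph0_pos.trans_le hlam
    · exact (lt_aleph0_of_finite _).trans_le hlam
  obtain ⟨f, -, hf⟩ := exists_free_choice hlam G hG d (fun _ : Fin m => Set.univ)
    (fun _ => by rw [mk_univ, hA]) ρ
  have hinj : Function.Injective f := by
    intro i j hij
    by_contra hne
    have hne' : e (s i) ≠ e (s j) := fun h => hne (by
      have := congrArg Subtype.val (e.injective h)
      exact Finset.singleton_injective this)
    obtain ⟨k, hk⟩ := Function.ne_iff.1 hne'
    rcases lt_or_gt_of_ne hk with h | h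
    · exact hf k {i} j (by simpa using hρ k i j h) (Or.inr (by simp [hij]))
    · exact hf k {j} i (by simpa using hρ k j i h) (Or.inr (by simp [hij]))
  refine ⟨Set.range f, ?_, ?_⟩
  · have h := mk_range_eq_of_injective hinj
    simp only [lift_uzero, mk_fin, lift_natCast] at h
    exact h
  · intro X hXH hXr
    rintro y ⟨hyF, j, rfl⟩
    by_contra hjX
    let S : Finset (Fin m) := Finset.univ.filter fun i => f i ∈ X
    have hSX : ((S.image f : Finset A) : Set A) = X := by
      ext y
      simp only [Finset.coe_image, Set.mem_image, Finset.mem_coe, S, Finset.mem_filter,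
        Finset.mem_univ, true_and]
      constructor
      · rintro ⟨i, hi, rfl⟩; exact hi
      · intro hy
        obtain ⟨i, rfl⟩ := hXH hy
        exact ⟨i, hy, rfl⟩
    have hcard : (S.image f).card = r := by
      have h := hXr
      rw [← hSX] at h
      simpa using h
    have hSr : S.card = r := by rwa [Finset.card_image_of_injective _ hinj] at hcard
    let sS : Bm1r m r := ⟨S, Or.inr hSr⟩
    have hnle : ¬ e (s j) ≤ e sS := by
      rw [e.le_iff_le]
      intro h
      have : j ∈ S := Finset.singleton_subset_iff.1 (show ({j} : Finset (Fin m)) ⊆ S from h)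
      exact hjX (Finset.mem_filter.1 this).2
    obtain ⟨k, hk⟩ := not_forall.1 hnle
    refine hf k S j (fun x hx => hρ k x j (lt_of_le_of_lt ?_ (not_le.1 hk))) (Or.inl ?_)
    · exact (e.le_iff_le.2 (show s x ≤ sS from
        show ({x} : Finset (Fin m)) ⊆ S from Finset.singleton_subset_iff.2 hx)) k
    · rw [if_pos hcard, hSX]
      exact hyF
end

section
/- Let n and r be positive integers with 2 ≤ r < n. Then for every infinite cardinal λ, the relation (λ^{+(n-1)},r,λ)→2^{⌊(1/2)(1-2^{-r})^{-n/r}⌋} holds; that is, every map F : [λ^{+(n-1)}]^r → [λ^{+(n-1)}]^{<λ} admits a free set of cardinality 2^{⌊(1/2)(1-2^{-r})^{-n/r}⌋}, where ⌊x⌋ denotes the greatest integer at most the real number x. -/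
/-!
Write `n = k + 1` and let `t` be the integer part in the exponent. Two ingredients are combined.

*Finite part.* A set `R` and a point `p` are separated by a linear preorder if every element of `R`
is strictly below `p`. There are `n` preorders on the `2 ^ t` points of `Fin t → Bool` which together
separate every point from every `r`-set not containing it (`exists_scrambling`; the idea is due to
Hajnal and Spencer). They are lexicographic orders, the `i`-th one being twisted by the `i`-th row of
an `n × t` Boolean matrix `M`. If `j_q` is the first coordinate in which `q ∈ R` differs from `p`,
then the `i`-th order separates `p` from `R` as soon as row `i` agrees with `p` on all the `j_q`. So
it is enough that on any `s = min r t` columns every Boolean pattern occurs as a row of `M`, and such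
an `M` exists by counting, since `C(t,s) 2^s (1 - 2^{-s})^n < 1`.

*Infinite part.* Let `P` be finite with rank functions `v 0, …, v k : P → ℕ`, and let
`B p`, for `p : P`, be sets of size at least `λ^{+k}`. Then there are `a p ∈ B p` such that
`a p ∉ G (a '' D)` whenever some `v i` places `D` strictly below `p` (`exists_free_choice`). This is
an induction on `k`. For `k = 0` the points are chosen in the order of `v 0`, avoiding fewer than `λ`
elements each time. For the step, the sets `B p` are shrunk to pieces of size `μ = λ^{+k}` lying in
consecutive differences of a chain of `G`-closed sets of size at most `μ`, arranged along `v (k+1)`.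
Closedness takes care of `v (k+1)`, whatever points are chosen from those pieces, and the induction
hypothesis deals with the other ranks.

Applied to the scrambling preorders, the range of `a` is the required free set.
-/

universe u

open Cardinal

/-! ### Choosing points that avoid a set mapping along several orders -/

/-- The `ω`-step closure of `S` under `G` is no larger than `μ`. -/
theorem exists_closed {A : Type u} (μ : Cardinal.{u}) (hμ : ℵ₀ ≤ μ)
    (G : Finset A → Set A) (hG : ∀ Z, #(G Z) ≤ μ) (S : Set A) (hS : #S ≤ μ) :
    ∃ C : Set A, S ⊆ C ∧ #C ≤ μ ∧ ∀ Z : Finset A, ↑Z ⊆ C → G Z ⊆ C := by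
  classical
  let step : Set A → Set A := fun T => T ∪ ⋃ Z : Finset T, G (Z.map (Function.Embedding.subtype _))
  have hstep : ∀ T : Set A, #T ≤ μ → #(step T) ≤ μ := by
    intro T hT
    refine (mk_union_le _ _).trans (add_le_of_le hμ hT ?_)
    refine (mk_iUnion_le _).trans ?_
    refine (mul_le_mul' ?_ (ciSup_le' fun Z => hG _)).trans (mul_eq_self hμ).le
    rcases finite_or_infinite T with h | h
    · exact (lt_aleph0_of_finite _).le.trans hμ
    · rw [mk_finset_of_infinite]; exact hT
  let T : ℕ → Set A := fun k => step^[k] S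
  have hTs : ∀ k, T (k + 1) = step (T k) := fun k => Function.iterate_succ_apply' _ _ _
  have hT : ∀ k, #(T k) ≤ μ := by
    intro k
    induction k with
    | zero => exact hS
    | succ k ih => rw [hTs]; exact hstep _ ih
  have hmono : Monotone T := monotone_nat_of_le_succ fun k => by
    rw [hTs]; exact Set.subset_union_left
  refine ⟨⋃ k, T k, Set.subset_iUnion T 0, ?_, ?_⟩
  · have h := mk_iUnion_le_lift.{u, 0} T
    rw [lift_uzero] at h
    refine h.trans ((mul_le_mul' ?_ (ciSup_le' fun k => ?_)).trans (mul_eq_self hμ).le)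
    · simpa using hμ
    · simpa using hT k
  · intro Z hZ
    obtain ⟨k, hk⟩ := hmono.directed_le.exists_mem_subset_of_finset_subset_biUnion hZ
    refine Set.Subset.trans ?_ (Set.subset_iUnion T (k + 1))
    rw [hTs]
    refine Set.Subset.trans ?_ Set.subset_union_right
    refine Set.Subset.trans ?_ (Set.subset_iUnion _ (Z.subtype (· ∈ T k)))
    rw [show (Z.subtype (· ∈ T k)).map (Function.Embedding.subtype _) = Z from
      Finset.subtype_map_of_mem fun x hx => hk hx]

theorem mk_iUnion_lt_of_fintype {A : Type u} {ι : Type*} [Fintype ι] (lam : Cardinal.{u})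
    (hlam : ℵ₀ ≤ lam) (f : ι → Set A) (hf : ∀ i, #(f i) < lam) : #(⋃ i, f i) < lam := by
  classical
  have key : ∀ s : Finset ι, #(⋃ i ∈ s, f i : Set A) < lam := by
    intro s
    induction s using Finset.induction_on with
    | empty => simpa using aleph0_pos.trans_le hlam
    | insert i s _ ih =>
      rw [Finset.set_biUnion_insert]
      exact (mk_union_le _ _).trans_lt (add_lt_of_lt hlam (hf i) ih)
  simpa using key Finset.univ

/-- Selection along a single rank function, by recursion on the rank: at each stage the values of
`G` at the finitely many sets of points already chosen cover fewer than `lam` elements. -/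
theorem exists_choice_base {A P : Type u} [Fintype P] (lam : Cardinal.{u}) (hlam : ℵ₀ ≤ lam)
    (G : Finset A → Set A) (hG : ∀ Z, #(G Z) < lam) [DecidableEq A] (v : P → ℕ)
    (B : P → Set A) (hB : ∀ p, lam ≤ #(B p)) :
    ∃ a : P → A, ∀ p, a p ∈ B p ∧
      ∀ D : Finset P, (∀ d ∈ D, v d < v p) → a p ∉ G (D.image a) := by
  classical
  have key : ∀ k : ℕ, ∃ a : P → A, ∀ p, v p < k → a p ∈ B p ∧
      ∀ D : Finset P, (∀ d ∈ D, v d < v p) → a p ∉ G (D.image a) := by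
    intro k
    induction k with
    | zero =>
      have hne : ∀ p, (B p).Nonempty := fun p => by
        rw [← Set.nonempty_coe_sort, ← mk_ne_zero_iff]
        exact (aleph0_pos.trans_le (hlam.trans (hB p))).ne'
      exact ⟨fun p => (hne p).some, fun p hp => absurd hp (by omega)⟩
    | succ k ih =>
      obtain ⟨a, ha⟩ := ih
      have hex : ∀ p, ∃ x ∈ B p, x ∉ ⋃ D : Finset P, G (D.image a) := by
        intro p
        by_contra! hcon
        have h1 : #(B p) ≤ #(⋃ D : Finset P, G (D.image a)) := mk_le_mk_of_subset hcon
        have h2 : #(⋃ D : Finset P, G (D.image a)) < lam :=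
          mk_iUnion_lt_of_fintype lam hlam _ fun D => hG _
        exact absurd ((hB p).trans h1) (not_le.2 h2)
      choose x hxB hx using hex
      have himg : ∀ D : Finset P, (∀ d ∈ D, v d < k) →
          D.image (fun p => if v p < k then a p else x p) = D.image a := fun D hD =>
        Finset.image_congr fun d hd => if_pos (hD d hd)
      refine ⟨fun p => if v p < k then a p else x p, fun p hp => ?_⟩
      by_cases hpk : v p < k
      · simp only [hpk, if_true]
        refine ⟨(ha p hpk).1, fun D hD => ?_⟩
        rw [himg D fun d hd => (hD d hd).trans hpk]
        exact (ha p hpk).2 D hD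
      · simp only [hpk, if_false]
        refine ⟨hxB p, fun D hD => ?_⟩
        rw [himg D fun d hd => (hD d hd).trans_le (by omega)]
        exact fun h => hx p (Set.mem_iUnion.2 ⟨D, h⟩)
  obtain ⟨a, ha⟩ := key (Finset.univ.sup v + 1)
  exact ⟨a, fun p => ha p (Nat.lt_succ_of_le (Finset.le_sup (Finset.mem_univ p)))⟩

/-- With `k + 1` rank functions and candidate sets of size at least `λ^{+k}`, one can choose points
`a p ∈ B p` such that `G (a '' D)` omits `a p` whenever some rank function puts all of `D` strictly
below `p`. The rank functions need not be injective. -/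
theorem exists_free_choice_s19 {A P : Type u} [Fintype P] (lam : Cardinal.{u}) (hlam : ℵ₀ ≤ lam)
    (G : Finset A → Set A) (hG : ∀ Z, #(G Z) < lam) [DecidableEq A] (v : ℕ → P → ℕ) (k : ℕ) :
    ∀ B : P → Set A, (∀ p, succN lam k ≤ #(B p)) →
    ∃ a : P → A, ∀ p, a p ∈ B p ∧
      ∀ i ≤ k, ∀ D : Finset P, (∀ d ∈ D, v i d < v i p) → a p ∉ G (D.image a) := by
  classical
  induction k with
  | zero =>
    intro B hB
    obtain ⟨a, ha⟩ := exists_choice_base lam hlam G hG (v 0) B hB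
    refine ⟨a, fun p => ⟨(ha p).1, fun i hi => ?_⟩⟩
    obtain rfl : i = 0 := by omega
    exact (ha p).2
  | succ k ih =>
    intro B hB
    set μ := succN lam k with hμdef
    have hsucc : succN lam (k + 1) = Order.succ μ := Function.iterate_succ_apply' _ _ _
    have hlμ : lam ≤ μ := by
      clear_value μ
      subst hμdef
      clear ih hB hsucc
      induction k with
      | zero => exact le_rfl
      | succ k ih =>
        exact ih.trans ((Order.le_succ _).trans_eq (Function.iterate_succ_apply' _ _ _).symm)
    have hμ : ℵ₀ ≤ μ := hlam.trans hlμ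
    -- One step of the chain: beyond any small set there are `μ` fresh elements of each `B p`,
    -- and these fit into a closed set that is again small.
    have hstep : ∀ C : Set A, #C ≤ μ → ∃ (E : P → Set A) (C' : Set A), #C' ≤ μ ∧ C ⊆ C' ∧
        (∀ Z : Finset A, ↑Z ⊆ C' → G Z ⊆ C') ∧
        ∀ p, E p ⊆ C' ∧ E p ⊆ B p \ C ∧ #(E p) = μ := by
      intro C hC
      have hE : ∀ p, ∃ E : Set A, E ⊆ B p \ C ∧ #E = μ := by
        intro p
        apply le_mk_iff_exists_subset.1
        by_contra! hlt
        have h1 : #(B p) ≤ μ :=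
          (mk_le_mk_of_subset (Set.subset_sdiff_union (B p) C)).trans
            ((mk_union_le _ _).trans (add_le_of_le hμ hlt.le hC))
        have h2 := (hB p).trans h1
        rw [hsucc] at h2
        exact absurd h2 (not_le.2 (Order.lt_succ μ))
      choose E hEB hE using hE
      obtain ⟨C', hC', hcard, hcl⟩ := exists_closed μ hμ G (fun Z => (hG Z).le.trans hlμ)
        (C ∪ ⋃ p, E p) ((mk_union_le _ _).trans (add_le_of_le hμ hC
          ((mk_iUnion_le _).trans ((mul_le_mul' ((lt_aleph0_of_finite P).le.trans hμ)
            (ciSup_le' fun p => (hE p).le)).trans (mul_eq_self hμ).le))))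
      exact ⟨E, C', hcard, Set.subset_union_left.trans hC', hcl, fun p =>
        ⟨((Set.subset_iUnion E p).trans Set.subset_union_right).trans hC', hEB p, hE p⟩⟩
    obtain ⟨C₀, -, hC₀, hcl₀⟩ := exists_closed μ hμ G (fun Z => (hG Z).le.trans hlμ) ∅
      (by simp)
    choose! E next hnext hsub hcl hEp using hstep
    let C : ℕ → Set A := fun j => next^[j] C₀
    have hCs : ∀ j, C (j + 1) = next (C j) := fun j => Function.iterate_succ_apply' _ _ _
    have hCμ : ∀ j, #(C j) ≤ μ := by
      intro j
      induction j with
      | zero => exact hC₀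
      | succ j ih => rw [hCs]; exact hnext _ ih
    have hCmono : Monotone C := monotone_nat_of_le_succ fun j => by
      rw [hCs]; exact hsub _ (hCμ j)
    have hCcl : ∀ j, ∀ Z : Finset A, ↑Z ⊆ C j → G Z ⊆ C j := by
      intro j
      cases j with
      | zero => exact hcl₀
      | succ j => rw [hCs]; exact hcl _ (hCμ j)
    obtain ⟨a, ha⟩ := ih (fun p => E (C (v (k + 1) p)) p) fun p =>
      (hEp _ (hCμ _) p).2.2.ge
    refine ⟨a, fun p => ⟨((hEp _ (hCμ _) p).2.1 (ha p).1).1, fun i hi D hD => ?_⟩⟩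
    rcases Nat.lt_or_ge k i with hki | hki
    · obtain rfl : i = k + 1 := by omega
      intro hmem
      refine ((hEp _ (hCμ _) p).2.1 (ha p).1).2 (hCcl _ _ ?_ hmem)
      intro y hy
      obtain ⟨d, hd, rfl⟩ := Finset.mem_image.1 (Finset.mem_coe.1 hy)
      refine hCmono (Nat.succ_le_of_lt (hD d hd)) ?_
      rw [Nat.succ_eq_add_one, hCs]
      exact (hEp _ (hCμ _) d).1 (ha d).1
    · exact (ha p).2 i hki D hD

/-! ### Scrambling orders on a Boolean cube -/

/-- Counting matrices: if the number of pairs (`s`-set `J` of columns, pattern on `J`) times the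
number of matrices omitting a given pattern is less than the number of all matrices, then some
matrix omits no pattern. -/
theorem exists_matrix (n t s : ℕ)
    (h : t.choose s * 2 ^ s * (2 ^ t - 2 ^ (t - s)) ^ n < 2 ^ (t * n)) :
    ∃ M : Fin n → Fin t → Bool, ∀ J : Finset (Fin t), J.card = s →
      ∀ p : Fin t → Bool, ∃ i, ∀ j ∈ J, M i j = p j := by
  classical
  -- `row J K` consists of the rows whose restriction to `J` is the indicator function of `K`.
  let row : Finset (Fin t) → Finset (Fin t) → Finset (Fin t → Bool) := fun J K =>
    Fintype.piFinset fun j => if j ∈ J then {decide (j ∈ K)} else Finset.univ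
  let bad : Finset (Fin n → Fin t → Bool) :=
    (Finset.univ.powersetCard s).biUnion fun J => J.powerset.biUnion fun K =>
      Fintype.piFinset fun _ : Fin n => (row J K)ᶜ
  have hrow : ∀ J K, J.card = s → (row J K).card = 2 ^ (t - s) := by
    intro J K hJ
    simp only [row, Fintype.card_piFinset, apply_ite Finset.card, Finset.card_singleton,
      Finset.card_univ, Fintype.card_bool]
    rw [Finset.prod_ite]
    simp [Finset.filter_not, Finset.card_sdiff, hJ]
  have hbad : bad.card ≤ t.choose s * (2 ^ s * (2 ^ t - 2 ^ (t - s)) ^ n) := by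
    refine (Finset.card_biUnion_le_card_mul _ _ (2 ^ s * (2 ^ t - 2 ^ (t - s)) ^ n) ?_).trans ?_
    · intro J hJ
      have hJ := (Finset.mem_powersetCard.1 hJ).2
      refine (Finset.card_biUnion_le_card_mul _ _ ((2 ^ t - 2 ^ (t - s)) ^ n) ?_).trans ?_
      · intro K _
        simp [Fintype.card_piFinset, Finset.card_compl, hrow J K hJ]
      · simp [hJ]
    · simp
  have hlt : bad.card < (Finset.univ : Finset (Fin n → Fin t → Bool)).card := by
    refine hbad.trans_lt ?_
    simp only [Finset.card_univ, Fintype.card_fun, Fintype.card_bool, Fintype.card_fin]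
    rw [← pow_mul, ← mul_assoc]
    exact h
  obtain ⟨M, -, hM⟩ := Finset.exists_mem_notMem_of_card_lt_card hlt
  refine ⟨M, fun J hJ p => ?_⟩
  by_contra! hcon
  apply hM
  simp only [bad, Finset.mem_biUnion]
  refine ⟨J, by simp [hJ], J.filter (fun j => p j = true), by simp, ?_⟩
  rw [Fintype.mem_piFinset]
  intro i
  obtain ⟨j, hj, hne⟩ := hcon i
  rw [Finset.mem_compl]
  intro hmem
  have := Fintype.mem_piFinset.1 hmem j
  apply hne
  simpa [hj] using this

/-- Existence of `n` rank functions on the Boolean cube which separate each point from each set of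
at most `r` other points. The `i`-th one is the rank in the lexicographic order in which coordinate
`j` counts as larger when it equals the matrix entry `M i j`. -/
theorem exists_scrambling (n t r : ℕ)
    (h : t.choose (min r t) * 2 ^ (min r t) * (2 ^ t - 2 ^ (t - min r t)) ^ n < 2 ^ (t * n)) :
    ∃ v : Fin n → (Fin t → Bool) → ℕ, ∀ (R : Finset (Fin t → Bool)) (p : Fin t → Bool),
      R.card ≤ r → p ∉ R → ∃ i, ∀ q ∈ R, v i q < v i p := by
  classical
  obtain ⟨M, hM⟩ := exists_matrix n t (min r t) h
  let tw : Fin n → (Fin t → Bool) → Lex (Fin t → Bool) := fun i p => toLex fun j => p j == M i j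
  let v : Fin n → (Fin t → Bool) → ℕ := fun i p =>
    (Finset.univ.filter fun q => tw i q < tw i p).card
  have hv : ∀ i p q, tw i q < tw i p → v i q < v i p := by
    intro i p q hqp
    refine Finset.card_lt_card (Finset.ssubset_iff_of_subset ?_ |>.2 ⟨q, by simpa, fun h =>
      lt_irrefl (tw i q) (Finset.mem_filter.1 h).2⟩)
    intro x hx
    simp only [Finset.mem_filter, Finset.mem_univ, true_and] at hx ⊢
    exact hx.trans hqp
  refine ⟨v, fun R p hR hp => ?_⟩
  -- `f q` is the first coordinate in which `q` differs from `p`.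
  have hfirst : ∀ q, q ∈ R → ∃ j, q j ≠ p j ∧ ∀ j' < j, q j' = p j' := by
    intro q hq
    have hne : q ≠ p := fun h => hp (h ▸ hq)
    obtain ⟨j, hj⟩ := Function.ne_iff.1 hne
    obtain ⟨j, hj, hmin⟩ := WellFounded.has_min (wellFounded_lt (α := Fin t))
      {j | q j ≠ p j} ⟨j, hj⟩
    exact ⟨j, hj, fun j' hj' => by_contra fun hc => hmin j' hc hj'⟩
  choose f hf hmin using hfirst
  let J₀ : Finset (Fin t) := R.attach.image fun q => f q.1 q.2
  have hJ₀ : J₀.card ≤ min r t := le_min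
    (Finset.card_image_le.trans (by simpa using hR)) (by simpa using J₀.card_le_univ)
  obtain ⟨J, hJJ, hJ⟩ := Finset.exists_superset_card_eq hJ₀ (by simp)
  obtain ⟨i, hi⟩ := hM J hJ p
  refine ⟨i, fun q hq => hv i p q ⟨f q hq, fun j hj => ?_, ?_⟩⟩
  · simp [tw, hmin q hq j hj]
  · have : M i (f q hq) = p (f q hq) :=
      hi _ (hJJ (Finset.mem_image.2 ⟨⟨q, hq⟩, Finset.mem_attach _ _, rfl⟩))
    have hne := hf q hq
    simp only [tw, Pi.toLex_apply, this]
    revert hne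
    cases q (f q hq) <;> cases p (f q hq) <;> simp

/-! ### The numerical estimate -/

/-- The numerical condition behind the exponent: `2t ≤ (1 - 2^{-r})^{-n/r}` gives
`(2t)^r (1 - 2^{-r})^n ≤ 1`, which bounds the number of matrices omitting some pattern. -/
theorem count_lt (n r t : ℕ) (hr : 2 ≤ r) (hrn : r < n)
    (ht : t = Int.toNat
      ⌊(1 / 2 : ℝ) * ((1 : ℝ) - 2 ^ (-(r : ℝ))) ^ (-(n : ℝ) / (r : ℝ))⌋) :
    t.choose (min r t) * 2 ^ (min r t) * (2 ^ t - 2 ^ (t - min r t)) ^ n < 2 ^ (t * n) := by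
  rcases Nat.eq_zero_or_pos t with rfl | htpos
  · simp; omega
  set q : ℝ := (1 : ℝ) - 2 ^ (-(r : ℝ)) with hq
  have hq' : q = 1 - (1 / 2) ^ r := by
    rw [hq, Real.rpow_neg (by norm_num), Real.rpow_natCast]; simp
  have hqpos : 0 < q := by
    rw [hq']; have := pow_lt_one₀ (a := (1 / 2 : ℝ)) (by norm_num) (by norm_num) (n := r) (by omega)
    linarith
  have h1 : (2 * t : ℝ) ≤ q ^ (-(n : ℝ) / (r : ℝ)) := by
    have h0 : (0 : ℝ) ≤ (1 / 2 : ℝ) * q ^ (-(n : ℝ) / (r : ℝ)) := by positivity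
    have h2 := Int.floor_le ((1 / 2 : ℝ) * q ^ (-(n : ℝ) / (r : ℝ)))
    have h3 : (t : ℤ) = ⌊(1 / 2 : ℝ) * q ^ (-(n : ℝ) / (r : ℝ))⌋ := by
      rw [ht]; exact Int.toNat_of_nonneg (Int.floor_nonneg.2 h0)
    rw [← h3] at h2
    push_cast at h2
    linarith
  have h2 : (2 * t : ℝ) ^ r * q ^ n ≤ 1 := by
    have h3 : (2 * t : ℝ) ^ r ≤ (q ^ n)⁻¹ := by
      refine (pow_le_pow_left₀ (by positivity) h1 r).trans_eq ?_
      rw [← Real.rpow_natCast, ← Real.rpow_mul hqpos.le, div_mul_cancel₀ _ (by positivity),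
        Real.rpow_neg hqpos.le, Real.rpow_natCast]
    calc _ ≤ (q ^ n)⁻¹ * q ^ n := by gcongr
      _ = 1 := inv_mul_cancel₀ (by positivity)
  set s := min r t with hs
  have hst : s ≤ t := min_le_right _ _
  have hsr : s ≤ r := min_le_left _ _
  have ht1 : (1 : ℝ) ≤ t := by exact_mod_cast htpos
  -- The inequality is strict because of the exponent if `s < r`, and because `t.choose r < t ^ r`
  -- (here `2 ≤ r` is needed) if `s = r`.
  have h3 : (t.choose s * 2 ^ s : ℝ) < (2 * t) ^ r := by
    rcases hsr.lt_or_eq with hlt | heq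
    · have h4 : (t.choose s : ℝ) ≤ t ^ s := by exact_mod_cast Nat.choose_le_pow t s
      calc (t.choose s * 2 ^ s : ℝ) ≤ t ^ s * 2 ^ s := by gcongr
        _ = (2 * t) ^ s := by rw [mul_pow, mul_comm]
        _ < (2 * t) ^ r := pow_lt_pow_right₀ (by linarith) hlt
    · rw [heq, mul_pow, mul_comm]
      have h4 : (t.choose r : ℝ) < t ^ r := by
        exact_mod_cast Nat.choose_lt_pow (by omega) hr
      gcongr
  have h5 : (1 - (1 / 2) ^ s : ℝ) ≤ q := by
    rw [hq']
    have := pow_le_pow_of_le_one (a := (1 / 2 : ℝ)) (by norm_num) (by norm_num) hsr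
    linarith
  have h5' : (0 : ℝ) ≤ 1 - (1 / 2) ^ s := by
    have := pow_le_one₀ (a := (1 / 2 : ℝ)) (n := s) (by norm_num) (by norm_num)
    linarith
  have h6 : ((2 ^ t - 2 ^ (t - s) : ℕ) : ℝ) = 2 ^ t * (1 - (1 / 2) ^ s) := by
    rw [Nat.cast_sub (Nat.pow_le_pow_right (by norm_num) (by omega))]
    push_cast
    rw [pow_sub₀ _ (by norm_num) hst, one_div, inv_pow]
    ring
  have h7 : ((t.choose s * 2 ^ s * (2 ^ t - 2 ^ (t - s)) ^ n : ℕ) : ℝ) < (2 ^ (t * n) : ℕ) := by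
    rw [Nat.cast_mul, Nat.cast_pow, h6]
    push_cast
    rw [mul_pow, ← pow_mul]
    calc (t.choose s * 2 ^ s : ℝ) * (2 ^ (t * n) * (1 - (1 / 2) ^ s) ^ n)
        ≤ (t.choose s * 2 ^ s : ℝ) * (2 ^ (t * n) * q ^ n) := by gcongr
      _ < (2 * t) ^ r * (2 ^ (t * n) * q ^ n) := by gcongr
      _ = ((2 * t) ^ r * q ^ n) * 2 ^ (t * n) := by ring
      _ ≤ 1 * 2 ^ (t * n) := by gcongr
      _ = 2 ^ (t * n) := one_mul _
  exact_mod_cast h7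

/-! ### The free set -/

/-- For `2 ≤ r < n` and every infinite cardinal `λ`, the relation
`(λ^{+(n-1)},r,λ)→2^⌊(1/2)(1-2^{-r})^{-n/r}⌋` holds. -/
theorem stmt19 (n r : ℕ) (hr : 2 ≤ r) (hrn : r < n)
    (lam : Cardinal.{u}) (hlam : ℵ₀ ≤ lam) :
    ArrowFree (succN lam (n - 1)) r lam
      (((2 ^ Int.toNat
          ⌊(1 / 2 : ℝ) * ((1 : ℝ) - 2 ^ (-(r : ℝ))) ^ (-(n : ℝ) / (r : ℝ))⌋ : ℕ) :
        Cardinal)) := by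
  classical
  intro A hA F hF
  have hcount := count_lt n r _ hr hrn rfl
  generalize Int.toNat
    ⌊(1 / 2 : ℝ) * ((1 : ℝ) - 2 ^ (-(r : ℝ))) ^ (-(n : ℝ) / (r : ℝ))⌋ = t at hcount ⊢
  obtain ⟨v, hv⟩ := exists_scrambling n t r hcount
  -- Adding `Z` itself to the value at `Z` forces the chosen points to be distinct.
  let G : Finset A → Set A := fun Z => ↑Z ∪ if Z.card = r then F ↑Z else ∅
  have hG : ∀ Z, #(G Z) < lam := by
    intro Z
    refine (mk_union_le _ _).trans_lt (add_lt_of_lt hlam ?_ ?_)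
    · exact (lt_aleph0_of_finite _).trans_le hlam
    · split_ifs with hZ
      · exact hF _ (by simp [hZ])
      · simpa using aleph0_pos.trans_le hlam
  let w : ℕ → ULift.{u} (Fin t → Bool) → ℕ := fun i p => if h : i < n then v ⟨i, h⟩ p.down else 0
  obtain ⟨a, ha⟩ := exists_free_choice_s19 lam hlam G hG w (n - 1) (fun _ => Set.univ)
    (fun p => by rw [mk_univ, hA])
  have hfree : ∀ (R : Finset (ULift.{u} (Fin t → Bool))) p, R.card ≤ r → p ∉ R →
      a p ∉ G (R.image a) := by
    intro R p hR hp
    obtain ⟨i, hi⟩ := hv (R.image ULift.down) p.down (Finset.card_image_le.trans hR) (by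
      simpa [Finset.mem_image] using hp)
    refine (ha p).2 i (by omega) R fun d hd => ?_
    simpa [w] using hi d.down (Finset.mem_image_of_mem _ hd)
  have hinj : Function.Injective a := by
    intro p q hpq
    by_contra hne
    exact hfree {q} p (by simp; omega) (by simpa using hne) (Or.inl (by simp [hpq]))
  refine ⟨Set.range a, ?_, ?_⟩
  · rw [mk_range_eq a hinj]; simp
  · rintro X hX hXr _ ⟨hxF, p, rfl⟩
    have hXfin : X.Finite := by
      rw [← lt_aleph0_iff_set_finite, hXr]; exact natCast_lt_aleph0
    obtain ⟨R, hR⟩ : ∃ R : Finset (ULift.{u} (Fin t → Bool)), (↑(R.image a) : Set A) = X :=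
      ⟨Finset.univ.filter (a · ∈ X), by
        ext y
        constructor
        · intro hy
          obtain ⟨q, hq, rfl⟩ := Finset.mem_image.1 (Finset.mem_coe.1 hy)
          exact (Finset.mem_filter.1 hq).2
        · intro hy
          obtain ⟨q, rfl⟩ := hX hy
          exact Finset.mem_coe.2 (Finset.mem_image_of_mem a (by simpa using hy))⟩
    have hcard : (R.image a).card = r := by
      rw [← hR] at hXr; simpa using hXr
    by_contra hpX
    refine hfree R p ?_ ?_ (Or.inr ?_)
    · rw [← hcard, Finset.card_image_of_injective _ hinj]
    · intro hp; exact hpX (hR ▸ Finset.mem_coe.2 (Finset.mem_image_of_mem a hp))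
    · rw [if_pos hcard, hR]; exact hxF
end
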